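/- Let ℳ be a finite ε̲-packing net of a hypothesis class H ⊆ L²(μ) and 𝒩 a finite ε-covering net of H, both with respect to the L²(μ) norm. Suppose samples are generated as y = f_θ(x) + ε with ε ∼ N(0, 1/2) independent Gaussian noise, so KL(P_θ^{⊗N} ‖ P_{θ'}^{⊗N}) = N‖f_θ − f_{θ'}‖²_{L²(μ)}. Then for uniformly random f_θ ∈ ℳ, the mutual information between θ and the sample S of size N satisfies I(θ; S) ≤ log|𝒩| + N ε². -/

import Mathlib

open MeasureTheory

theorem aux_shift {X : Type*} [MeasurableSpace X] (ν : Measure X) [SigmaFinite ν]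
    (a f : X → ℝ) (ha : Integrable a ν) (hf : Measurable f) (G : ℝ → ℝ) (hG : Integrable G) :
    Integrable (fun p : X × ℝ => a p.1 * G (p.2 - f p.1)) (ν.prod volume) ∧
    ∫ p, a p.1 * G (p.2 - f p.1) ∂(ν.prod volume) = (∫ x, a x ∂ν) * ∫ z, G z := by
  have hT : MeasurePreserving (fun p : X × ℝ => (p.1, p.2 - f p.1)) (ν.prod volume)
      (ν.prod volume) := by
    refine (MeasurePreserving.id ν).skew_product (g := fun x y => y - f x) ?_ ?_
    · simp only [Function.uncurry_def]; fun_prop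
    · exact Filter.Eventually.of_forall fun x => (measurePreserving_sub_right volume (f x)).map_eq
  have hi : Integrable (fun p : X × ℝ => a p.1 * G p.2) (ν.prod volume) := ha.mul_prod hG
  refine ⟨(hT.integrable_comp hi.aestronglyMeasurable).2 hi, ?_⟩
  rw [← integral_prod_mul]
  conv_rhs => rw [← hT.map_eq]
  rw [integral_map hT.measurable.aemeasurable (by rw [hT.map_eq]; exact hi.aestronglyMeasurable)]

theorem aux_G0 : Integrable (fun z : ℝ => (1 / Real.sqrt Real.pi) * Real.exp (-z ^ 2)) ∧
    ∫ z : ℝ, (1 / Real.sqrt Real.pi) * Real.exp (-z ^ 2) = 1 := by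
  constructor
  · have := (integrable_exp_neg_mul_sq (b := 1) one_pos).const_mul (1 / Real.sqrt Real.pi)
    simpa using this
  · have := integral_gaussian 1
    rw [integral_const_mul]
    simp at this
    rw [this]
    have : Real.sqrt Real.pi ≠ 0 := by positivity
    field_simp

theorem aux_G1 :
    Integrable (fun z : ℝ => 2 * z * ((1 / Real.sqrt Real.pi) * Real.exp (-z ^ 2))) ∧
    ∫ z : ℝ, 2 * z * ((1 / Real.sqrt Real.pi) * Real.exp (-z ^ 2)) = 0 := by
  constructor
  · have := (integrable_mul_exp_neg_mul_sq (b := 1) one_pos).const_mul (2 / Real.sqrt Real.pi)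
    refine this.congr (Filter.Eventually.of_forall fun z => ?_)
    simp; ring
  · have := integral_neg_eq_self (fun z : ℝ => 2 * z * ((1 / Real.sqrt Real.pi) * Real.exp (-z ^ 2))) volume
    simp only [mul_neg, neg_mul, integral_neg, neg_sq] at this
    linarith

theorem aux_pt {α : Type*} (M T : Finset α) (hM : M.Nonempty) (hT : T.Nonempty) (P L : α → ℝ)
    (φ : α → α) (hφ : ∀ f ∈ M, φ f ∈ T) (hP : ∀ f, 0 < P f)
    (hL : ∀ f ∈ M, Real.log (P f) - Real.log (P (φ f)) = L f) :
    ∑ f ∈ M, P f * Real.log (P f / ((1 / (M.card : ℝ)) * ∑ g ∈ M, P g)) ≤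
      ∑ f ∈ M, P f * (Real.log T.card + L f) + M.card * ((1 / (T.card : ℝ)) * ∑ g ∈ T, P g)
        - ∑ f ∈ M, P f := by
  have hm : (0 : ℝ) < M.card := by exact_mod_cast hM.card_pos
  have hk : (0 : ℝ) < T.card := by exact_mod_cast hT.card_pos
  have hSM : 0 < ∑ g ∈ M, P g := Finset.sum_pos (fun i _ => hP i) hM
  have hST : 0 < ∑ g ∈ T, P g := Finset.sum_pos (fun i _ => hP i) hT
  set b := (1 / (M.card : ℝ)) * ∑ g ∈ M, P g with hb
  set q := (1 / (T.card : ℝ)) * ∑ g ∈ T, P g with hq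
  have hb0 : 0 < b := mul_pos (one_div_pos.2 hm) hSM
  have hq0 : 0 < q := mul_pos (one_div_pos.2 hk) hST
  have hmb : ∑ g ∈ M, P g = M.card * b := by rw [hb, ← mul_assoc, mul_one_div_cancel hm.ne', one_mul]
  have key : ∀ f ∈ M, P f * Real.log (P f / b) ≤
      P f * (Real.log T.card + L f) + P f * (q / b - 1) := by
    intro f hf
    rw [← mul_add]
    refine mul_le_mul_of_nonneg_left ?_ (hP f).le
    have h1 : Real.log (q / b) ≤ q / b - 1 := Real.log_le_sub_one_of_pos (div_pos hq0 hb0)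
    have h2 : P (φ f) / T.card ≤ q := by
      rw [hq, one_div, div_eq_inv_mul]
      exact mul_le_mul_of_nonneg_left
        (Finset.single_le_sum (f := P) (fun i _ => (hP i).le) (hφ f hf)) (inv_pos.2 hk).le
    have h3 := Real.log_le_log (div_pos (hP _) hk) h2
    rw [Real.log_div (hP _).ne' hk.ne'] at h3
    rw [Real.log_div hq0.ne' hb0.ne'] at h1
    rw [Real.log_div (hP _).ne' hb0.ne']
    have := hL f hf
    linarith
  refine (Finset.sum_le_sum key).trans ?_
  rw [Finset.sum_add_distrib, ← Finset.sum_mul, hmb]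
  have : (M.card : ℝ) * b * (q / b - 1) = M.card * q - M.card * b := by
    rw [mul_sub, mul_one, mul_assoc, mul_div_cancel₀ _ hb0.ne']
  linarith

theorem aux_abs {α : Type*} (M : Finset α) (P : α → ℝ) (hP : ∀ f, 0 ≤ P f) (f : α)
    (hf : f ∈ M) :
    |P f * Real.log (P f / ((1 / (M.card : ℝ)) * ∑ g ∈ M, P g))| ≤
      P f * Real.log M.card + P f + (1 / (M.card : ℝ)) * ∑ g ∈ M, P g := by
  have hc : 1 ≤ M.card := Finset.card_pos.2 ⟨f, hf⟩
  have hc' : (1 : ℝ) ≤ M.card := by exact_mod_cast hc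
  have hlog := Real.log_nonneg hc'
  have hS : P f ≤ ∑ g ∈ M, P g := Finset.single_le_sum (f := P) (fun i _ => hP i) hf
  have hSn := (hP f).trans hS
  rcases (hP f).eq_or_lt with h0 | h0
  · rw [← h0]; simp; positivity
  have hSp := h0.trans_le hS
  set S := ∑ g ∈ M, P g
  have hm : (0 : ℝ) < M.card := by linarith
  have hb0 : 0 < (1 / (M.card : ℝ)) * S := by positivity
  have hpos : 0 < P f / ((1 / (M.card : ℝ)) * S) := by positivity
  have hup : Real.log (P f / ((1 / (M.card : ℝ)) * S)) ≤ Real.log M.card := by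
    refine Real.log_le_log hpos ?_
    rw [div_le_iff₀ hb0]
    field_simp
    exact hS
  have hlo := Real.one_sub_inv_le_log_of_pos hpos
  have h1 := mul_le_mul_of_nonneg_left hup h0.le
  have h2 := mul_le_mul_of_nonneg_left hlo h0.le
  have h3 : P f * (1 - (P f / ((1 / (M.card : ℝ)) * S))⁻¹) = P f - (1 / (M.card : ℝ)) * S := by
    field_simp
  rw [h3] at h2
  have h4 : 0 ≤ P f * Real.log M.card := by positivity
  rw [abs_le]
  constructor <;> linarith

/-- single sample density -/
noncomputable def rho {X : Type*} (m f : X → ℝ) (p : X × ℝ) : ℝ :=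
  (1 / Real.sqrt Real.pi) * Real.exp (-(p.2 - f p.1) ^ 2) * m p.1

/-- single sample log-likelihood ratio -/
noncomputable def ell {X : Type*} (f f' : X → ℝ) (p : X × ℝ) : ℝ :=
  (p.2 - f' p.1) ^ 2 - (p.2 - f p.1) ^ 2

theorem rho_int {X : Type*} [MeasurableSpace X] (ν : Measure X) [SigmaFinite ν]
    (m f : X → ℝ) (hm : Integrable m ν) (hm1 : ∫ x, m x ∂ν = 1) (hf : Measurable f) :
    Integrable (rho m f) (ν.prod volume) ∧ ∫ p, rho m f p ∂(ν.prod volume) = 1 := by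
  obtain ⟨h1, h2⟩ := aux_shift ν m f hm hf _ aux_G0.1
  have : rho m f = fun p : X × ℝ =>
      m p.1 * ((1 / Real.sqrt Real.pi) * Real.exp (-(p.2 - f p.1) ^ 2)) := by
    funext p; unfold rho; ring
  rw [this]
  exact ⟨h1, by rw [h2, hm1, aux_G0.2, one_mul]⟩

theorem rho_ell_int {X : Type*} [MeasurableSpace X] (ν : Measure X) [SigmaFinite ν]
    (m f f' : X → ℝ) (C : ℝ) (hm : Integrable m ν) (hf : Measurable f)
    (hf' : Measurable f') (hC : ∀ x, |f x| ≤ C) (hC' : ∀ x, |f' x| ≤ C) :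
    Integrable (fun p => rho m f p * ell f f' p) (ν.prod volume) ∧
    ∫ p, rho m f p * ell f f' p ∂(ν.prod volume) = ∫ x, (f x - f' x) ^ 2 * m x ∂ν := by
  have hd : ∀ x, |f x - f' x| ≤ 2 * C := fun x => by
    have := abs_sub (f x) (f' x); linarith [hC x, hC' x]
  have i1 : Integrable (fun x => (f x - f' x) * m x) ν :=
    hm.bdd_mul (c := 2 * C) (by fun_prop) (Filter.Eventually.of_forall hd)
  have i2 : Integrable (fun x => (f x - f' x) ^ 2 * m x) ν := by
    refine hm.bdd_mul (c := (2 * C) ^ 2) (by fun_prop) (Filter.Eventually.of_forall fun x => ?_)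
    rw [norm_pow]
    exact pow_le_pow_left₀ (norm_nonneg _) (hd x) 2
  obtain ⟨a1, a2⟩ := aux_shift ν _ f i1 hf _ aux_G1.1
  obtain ⟨b1, b2⟩ := aux_shift ν _ f i2 hf _ aux_G0.1
  have : (fun p => rho m f p * ell f f' p) = fun p : X × ℝ =>
      (f p.1 - f' p.1) * m p.1 *
        (2 * (p.2 - f p.1) * ((1 / Real.sqrt Real.pi) * Real.exp (-(p.2 - f p.1) ^ 2))) +
      (f p.1 - f' p.1) ^ 2 * m p.1 *
        ((1 / Real.sqrt Real.pi) * Real.exp (-(p.2 - f p.1) ^ 2)) := by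
    funext p; unfold rho ell; ring
  rw [this]
  refine ⟨a1.add b1, ?_⟩
  rw [integral_add a1 b1, a2, b2, aux_G0.2, aux_G1.2]
  ring

theorem prod_int {Y : Type*} [MeasurableSpace Y] (κ : Measure Y) [SigmaFinite κ] (N : ℕ)
    (r l : Y → ℝ) (hr : Integrable r κ) (hr1 : ∫ y, r y ∂κ = 1)
    (hrl : Integrable (fun y => r y * l y) κ) :
    (Integrable (fun s : Fin N → Y => ∏ i, r (s i)) (Measure.pi fun _ => κ) ∧
      ∫ s : Fin N → Y, ∏ i, r (s i) ∂(Measure.pi fun _ => κ) = 1) ∧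
    (Integrable (fun s : Fin N → Y => (∏ i, r (s i)) * ∑ i, l (s i)) (Measure.pi fun _ => κ) ∧
      ∫ s : Fin N → Y, (∏ i, r (s i)) * ∑ i, l (s i) ∂(Measure.pi fun _ => κ)
        = N * ∫ y, r y * l y ∂κ) := by
  refine ⟨⟨Integrable.fintype_prod (f := fun _ => r) fun _ => hr, ?_⟩, ?_⟩
  · rw [integral_fintype_prod_eq_prod (fun _ => r)]; simp [hr1]
  have e : ∀ (i : Fin N) (s : Fin N → Y), (∏ j, r (s j)) * l (s i) =
      ∏ j, (if j = i then fun y => r y * l y else r) (s j) := by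
    intro i s
    rw [← Finset.mul_prod_erase _ _ (Finset.mem_univ i),
      ← Finset.mul_prod_erase _ (fun j => (if j = i then fun y => r y * l y else r) (s j))
        (Finset.mem_univ i)]
    have h : ∏ j ∈ Finset.univ.erase i, (if j = i then fun y => r y * l y else r) (s j)
        = ∏ j ∈ Finset.univ.erase i, r (s j) :=
      Finset.prod_congr rfl (fun j hj => by rw [if_neg (Finset.ne_of_mem_erase hj)])
    rw [h, if_pos rfl]; ring
  have hi : ∀ i : Fin N, Integrable (fun s : Fin N → Y => (∏ j, r (s j)) * l (s i))
      (Measure.pi fun _ => κ) := by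
    intro i
    simp_rw [e i]
    refine Integrable.fintype_prod (f := fun j => if j = i then fun y => r y * l y else r) ?_
    intro j
    split_ifs
    · exact hrl
    · exact hr
  have hv : ∀ i : Fin N, ∫ s : Fin N → Y, (∏ j, r (s j)) * l (s i) ∂(Measure.pi fun _ => κ)
      = ∫ y, r y * l y ∂κ := by
    intro i
    simp_rw [e i]
    rw [integral_fintype_prod_eq_prod (fun j => if j = i then fun y => r y * l y else r),
      ← Finset.mul_prod_erase _ _ (Finset.mem_univ i),
      Finset.prod_eq_one (fun j hj => by simp [Finset.ne_of_mem_erase hj, hr1])]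
    simp
  simp_rw [Finset.mul_sum]
  refine ⟨integrable_finsetSum _ fun i _ => hi i, ?_⟩
  rw [integral_finsetSum _ fun i _ => hi i, Finset.sum_congr rfl fun i _ => hv i]
  simp


/-- Mutual information bound for the Gaussian denoise problem: if `ℳ` is a finite
(packing) set of hypotheses and `𝒩` a finite ε-covering of it in `L²(μ)`, and samples are
`y = f(x) + ε` with `N(0, 1/2)` noise (so that `KL(P_f^{⊗N}‖P_{f'}^{⊗N}) = N‖f−f'‖²`),
then the mutual information between a uniform `f ∈ ℳ` and the `N`-sample satisfies
`I(θ;S) ≤ log|𝒩| + Nε²`. -/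
theorem stmt_15 {Xsp : Type*} [MeasurableSpace Xsp] (ν : Measure Xsp) [SigmaFinite ν]
    (μdens : Xsp → ℝ) (hμm : Measurable μdens) (hμ0 : ∀ x, 0 ≤ μdens x)
    (hμ1 : ∫ x, μdens x ∂ν = 1)
    (ℳ 𝒩 : Finset (Xsp → ℝ)) (hℳ : ℳ.Nonempty) (h𝒩 : 𝒩.Nonempty)
    (C : ℝ)
    (hmeas : ∀ f, f ∈ ℳ ∨ f ∈ 𝒩 → Measurable f) (hbdd : ∀ f, f ∈ ℳ ∨ f ∈ 𝒩 → ∀ x, |f x| ≤ C)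
    (ε : ℝ) (hε : 0 ≤ ε)
    (hcover : ∀ f ∈ ℳ, ∃ f' ∈ 𝒩, ∫ x, (f x - f' x) ^ 2 * μdens x ∂ν ≤ ε ^ 2)
    (N : ℕ) (hN : 0 < N)
    (pN : (Xsp → ℝ) → (Fin N → Xsp × ℝ) → ℝ)
    (hpN : ∀ f s, pN f s
      = ∏ i, (1 / Real.sqrt Real.pi) * Real.exp (-((s i).2 - f (s i).1) ^ 2) * μdens (s i).1) :
    (1 / (ℳ.card : ℝ)) * ∑ f ∈ ℳ, ∫ s,
        pN f s * Real.log (pN f s / ((1 / (ℳ.card : ℝ)) * ∑ g ∈ ℳ, pN g s))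
          ∂(Measure.pi fun _ : Fin N => ν.prod (volume : Measure ℝ))
      ≤ Real.log 𝒩.card + N * ε ^ 2 := by
  classical
  have hμi : Integrable μdens ν := not_imp_comm.1 integral_undef (by rw [hμ1]; exact one_ne_zero)
  choose! φ hφ hφε using hcover
  have hp : ∀ f, pN f = fun s => ∏ i, rho μdens f (s i) := by
    intro f; funext s; rw [hpN]; rfl
  set κ : Measure (Fin N → Xsp × ℝ) := Measure.pi fun _ : Fin N => ν.prod (volume : Measure ℝ)
    with hκ
  have hm : (0 : ℝ) < ℳ.card := by exact_mod_cast hℳ.card_pos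
  have hk : (0 : ℝ) < 𝒩.card := by exact_mod_cast h𝒩.card_pos
  have hP0 : ∀ f s, 0 ≤ pN f s := by
    intro f s
    rw [hpN]
    exact Finset.prod_nonneg fun i _ => mul_nonneg (by positivity) (hμ0 _)
  -- integrals
  have I1 : ∀ f, f ∈ ℳ ∨ f ∈ 𝒩 → Integrable (pN f) κ ∧ ∫ s, pN f s ∂κ = 1 := by
    intro f hf
    obtain ⟨a, b⟩ := rho_int ν μdens f hμi hμ1 (hmeas f hf)
    have := (prod_int (ν.prod (volume : Measure ℝ)) N (rho μdens f) (fun _ => 0) a b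
      (by simp)).1
    rw [hp]
    exact this
  have I2 : ∀ f ∈ ℳ, Integrable (fun s => pN f s * ∑ i, ell f (φ f) (s i)) κ ∧
      ∫ s, pN f s * ∑ i, ell f (φ f) (s i) ∂κ ≤ N * ε ^ 2 := by
    intro f hf
    obtain ⟨a, b⟩ := rho_int ν μdens f hμi hμ1 (hmeas f (.inl hf))
    obtain ⟨c, d⟩ := rho_ell_int ν μdens f (φ f) C hμi (hmeas f (.inl hf))
      (hmeas _ (.inr (hφ f hf))) (hbdd f (.inl hf)) (hbdd _ (.inr (hφ f hf)))
    have := (prod_int (ν.prod (volume : Measure ℝ)) N (rho μdens f) (ell f (φ f)) a b c).2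
    rw [hp]
    refine ⟨this.1, this.2.le.trans ?_⟩
    rw [d]
    exact mul_le_mul_of_nonneg_left (hφε f hf) (Nat.cast_nonneg _)
  have hPm : ∀ f ∈ ℳ, Measurable (pN f) := by
    intro f hf
    have := hmeas f (.inl hf)
    rw [hp]
    unfold rho
    fun_prop
  have I0 : ∀ f ∈ ℳ, Integrable (fun s => pN f s *
      Real.log (pN f s / ((1 / (ℳ.card : ℝ)) * ∑ g ∈ ℳ, pN g s))) κ := by
    intro f hf
    have hs : Integrable (fun s => ∑ g ∈ ℳ, pN g s) κ :=
      integrable_finsetSum _ fun g hg => (I1 g (.inl hg)).1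
    have hf1 := (I1 f (.inl hf)).1
    refine Integrable.mono' (((hf1.mul_const (Real.log ℳ.card)).add hf1).add
      (hs.const_mul (1 / (ℳ.card : ℝ)))) ?_ (Filter.Eventually.of_forall fun s => ?_)
    · have h1 := hPm f hf
      have h2 : Measurable (fun s => ∑ g ∈ ℳ, pN g s) :=
        Finset.measurable_fun_sum _ fun g hg => hPm g hg
      exact (h1.mul (h1.div (h2.const_mul _)).log).aestronglyMeasurable
    · exact aux_abs ℳ (fun g => pN g s) (fun g => hP0 g s) f hf
  have hpt : ∀ s, ∑ f ∈ ℳ, pN f s * Real.log (pN f s / ((1 / (ℳ.card : ℝ)) * ∑ g ∈ ℳ, pN g s))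
      ≤ ∑ f ∈ ℳ, (pN f s * Real.log 𝒩.card + pN f s * ∑ i, ell f (φ f) (s i))
        + ℳ.card * ((1 / (𝒩.card : ℝ)) * ∑ g ∈ 𝒩, pN g s) - ∑ f ∈ ℳ, pN f s := by
    intro s
    by_cases h : ∀ i, 0 < μdens (s i).1
    · have hpos : ∀ f, 0 < pN f s := by
        intro f
        rw [hpN]
        exact Finset.prod_pos fun i _ => mul_pos (by positivity) (h i)
      have := aux_pt ℳ 𝒩 hℳ h𝒩 (fun f => pN f s) (fun f => ∑ i, ell f (φ f) (s i)) φ hφ hpos ?_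
      · simpa only [mul_add] using this
      intro f hf
      have hl : ∀ g, Real.log (pN g s) = ∑ i, (Real.log (1 / Real.sqrt Real.pi)
          + -((s i).2 - g (s i).1) ^ 2 + Real.log (μdens (s i).1)) := by
        intro g
        have hpi : 0 < 1 / Real.sqrt Real.pi := by positivity
        rw [hpN, Real.log_prod (fun i _ => (mul_pos (by positivity) (h i)).ne')]
        refine Finset.sum_congr rfl fun i _ => ?_
        rw [Real.log_mul (by positivity) (h i).ne', Real.log_mul hpi.ne' (Real.exp_ne_zero _),
          Real.log_exp]
      rw [hl, hl, ← Finset.sum_sub_distrib]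
      refine Finset.sum_congr rfl fun i _ => ?_
      unfold ell
      ring
    · push Not at h
      obtain ⟨i, hi⟩ := h
      have hz : ∀ f, pN f s = 0 := by
        intro f
        rw [hpN]
        exact Finset.prod_eq_zero (Finset.mem_univ i) (by rw [le_antisymm hi (hμ0 _), mul_zero])
      simp [hz]
  have J1 : ∀ f ∈ ℳ, Integrable
      (fun s => pN f s * Real.log 𝒩.card + pN f s * ∑ i, ell f (φ f) (s i)) κ :=
    fun f hf => ((I1 f (.inl hf)).1.mul_const _).add (I2 f hf).1
  have J2 : Integrable (fun s => ℳ.card * ((1 / (𝒩.card : ℝ)) * ∑ g ∈ 𝒩, pN g s)) κ :=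
    ((integrable_finsetSum _ fun g hg => (I1 g (.inr hg)).1).const_mul _).const_mul _
  have J3 : Integrable (fun s => ∑ g ∈ ℳ, pN g s) κ :=
    integrable_finsetSum _ fun g hg => (I1 g (.inl hg)).1
  have J1s := integrable_finsetSum ℳ J1
  have hmain := integral_mono (integrable_finsetSum ℳ I0) ((J1s.add J2).sub J3) hpt
  have e1 : ∫ s, (∑ f ∈ ℳ, (pN f s * Real.log 𝒩.card + pN f s * ∑ i, ell f (φ f) (s i))
        + ℳ.card * ((1 / (𝒩.card : ℝ)) * ∑ g ∈ 𝒩, pN g s) - ∑ f ∈ ℳ, pN f s) ∂κ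
      ≤ ℳ.card * (Real.log 𝒩.card + N * ε ^ 2) := by
    rw [integral_sub (by exact J1s.add J2) J3, integral_add J1s J2, integral_finsetSum _ J1,
      integral_finsetSum _ (fun g hg => (I1 g (.inl hg)).1), integral_const_mul,
      integral_const_mul, integral_finsetSum _ (fun g hg => (I1 g (.inr hg)).1),
      Finset.sum_congr rfl (fun g hg => (I1 g (.inl hg)).2),
      Finset.sum_congr rfl (fun g hg => (I1 g (.inr hg)).2)]
    have : ∑ f ∈ ℳ, ∫ s, (pN f s * Real.log 𝒩.card + pN f s * ∑ i, ell f (φ f) (s i)) ∂κ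
        ≤ ∑ f ∈ ℳ, (Real.log 𝒩.card + N * ε ^ 2) := by
      refine Finset.sum_le_sum fun f hf => ?_
      rw [integral_add ((I1 f (.inl hf)).1.mul_const _) (I2 f hf).1, integral_mul_const,
        (I1 f (.inl hf)).2, one_mul]
      linarith [(I2 f hf).2]
    simp only [Finset.sum_const, nsmul_eq_mul, mul_one] at this ⊢
    have h1 : (1 / (𝒩.card : ℝ)) * 𝒩.card = 1 := by field_simp
    rw [h1]
    linarith
  have hfin := hmain.trans e1
  rw [integral_finsetSum _ I0] at hfin
  rw [one_div, inv_mul_le_iff₀ hm]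
  simpa only [one_div] using hfin
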